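/- arXiv:2604.21135 — 5 statements merged into one kernel-verified Lean document; each statement's English description precedes it below -/
import Mathlib

section
/- If a (p,m,n) signed graph S whose underlying graph is a tree admits an additively graceful labeling, then n ≤ 2. -/
/-- A signed graph on vertex type `V`: a finite set of positive edges and a
finite set of negative edges, disjoint from one another, with no loops. -/
structure SignedGraph (V : Type) [DecidableEq V] where
  posEdges : Finset (Sym2 V)
  negEdges : Finset (Sym2 V)
  disjoint : Disjoint posEdges negEdges
  pos_not_diag : ∀ e ∈ posEdges, ¬ e.IsDiag
  neg_not_diag : ∀ e ∈ negEdges, ¬ e.IsDiag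

/-- Induced label on a positive edge: `|f u - f v|`. -/
def posLabel {V : Type} (f : V → ℕ) : Sym2 V → ℕ :=
  Sym2.lift ⟨fun u v => Nat.dist (f u) (f v), fun u v => Nat.dist_comm _ _⟩

/-- Induced label on a negative edge: `f u + f v`. -/
def negLabel {V : Type} (f : V → ℕ) : Sym2 V → ℕ :=
  Sym2.lift ⟨fun u v => f u + f v, fun u v => Nat.add_comm _ _⟩

/-- `f` is an additively graceful labeling of the signed graph `S`:
it is an injection into `{0, 1, …, m + ⌈(n+1)/2⌉}` whose induced labels on the
positive edges are exactly `{1, …, m}` and on the negative edges exactly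
`{1, …, n}`, where `m` (resp. `n`) is the number of positive (negative) edges.
(Note that `⌈(n+1)/2⌉ = (n+2)/2` with natural-number division.) -/
def IsAddGraceful {V : Type} [DecidableEq V] (S : SignedGraph V) (f : V → ℕ) : Prop :=
  Function.Injective f ∧
  (∀ v : V, f v ≤ S.posEdges.card + (S.negEdges.card + 2) / 2) ∧
  S.posEdges.image (posLabel f) = Finset.Icc 1 S.posEdges.card ∧
  S.negEdges.image (negLabel f) = Finset.Icc 1 S.negEdges.card

/-! A forest on `p` vertices has at most `p - 1` edges, whereas the labels, being distinct elements
of `{0, …, m + ⌈(n+1)/2⌉}`, number at most `m + ⌈(n+1)/2⌉ + 1`. Hence `n ≤ ⌈(n+1)/2⌉`, which forces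
`n ≤ 2`. -/

theorem card_edgeSet_le_card_sub_one_of_isAcyclic {V : Type*} [Finite V] {G : SimpleGraph V}
    (hG : G.IsAcyclic) : Nat.card G.edgeSet ≤ Nat.card V - 1 := by
  cases isEmpty_or_nonempty V
  · simp
  obtain ⟨T, hGT, -, hT⟩ :=
    SimpleGraph.connected_top.exists_isTree_le_of_le_of_isAcyclic le_top hG
  have hle : Nat.card G.edgeSet ≤ Nat.card T.edgeSet :=
    Nat.card_mono (Set.toFinite _) (SimpleGraph.edgeSet_mono hGT)
  have hcard := (SimpleGraph.isTree_iff_connected_and_card.1 hT).2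
  lia

theorem finite_and_card_le_succ_of_injective_of_le {α : Type*} {f : α → ℕ} {N : ℕ}
    (hinj : Function.Injective f) (hle : ∀ a, f a ≤ N) : Finite α ∧ Nat.card α ≤ N + 1 := by
  have hg : Function.Injective (Set.codRestrict f (Set.Iic N) hle) := hinj.codRestrict hle
  exact ⟨Finite.of_injective _ hg, by simpa using Nat.card_le_card_of_injective _ hg⟩

namespace SignedGraph

variable {V : Type} [DecidableEq V] (S : SignedGraph V)

/-- The underlying graph of a signed graph, with the signs of the edges forgotten. -/
def underlyingGraph : SimpleGraph V :=
  SimpleGraph.fromEdgeSet (↑(S.posEdges ∪ S.negEdges) : Set (Sym2 V))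

theorem edgeSet_underlyingGraph : S.underlyingGraph.edgeSet = ↑(S.posEdges ∪ S.negEdges) := by
  rw [underlyingGraph, SimpleGraph.edgeSet_fromEdgeSet, sdiff_eq_left, Set.disjoint_left]
  intro e he
  exact (Finset.mem_union.1 he).elim (S.pos_not_diag e) (S.neg_not_diag e)

theorem card_edgeSet_underlyingGraph :
    Nat.card S.underlyingGraph.edgeSet = S.posEdges.card + S.negEdges.card := by
  rw [edgeSet_underlyingGraph, Nat.card_coe_set_eq, Set.ncard_coe_finset,
    Finset.card_union_of_disjoint S.disjoint]

end SignedGraph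

theorem negEdges_card_le_two_of_tree_general {V : Type} [DecidableEq V] (S : SignedGraph V)
    (hacyclic : S.underlyingGraph.IsAcyclic) (f : V → ℕ) (hinj : Function.Injective f)
    (hle : ∀ v, f v ≤ S.posEdges.card + (S.negEdges.card + 2) / 2) :
    S.negEdges.card ≤ 2 := by
  obtain ⟨_, hvertices⟩ := finite_and_card_le_succ_of_injective_of_le hinj hle
  have hedges := card_edgeSet_le_card_sub_one_of_isAcyclic hacyclic
  rw [S.card_edgeSet_underlyingGraph] at hedges
  have hneg : S.negEdges.card ≤ (S.negEdges.card + 2) / 2 := by lia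
  lia

/-- If a `(p,m,n)` signed graph `S` whose underlying graph is
a tree admits an additively graceful labeling, then `n ≤ 2`. -/
theorem negEdges_card_le_two_of_tree {V : Type} [DecidableEq V] [Fintype V]
    (S : SignedGraph V)
    (htree : (SimpleGraph.fromEdgeSet (↑(S.posEdges ∪ S.negEdges) : Set (Sym2 V))).IsTree)
    (f : V → ℕ) (hf : IsAddGraceful S f) :
    S.negEdges.card ≤ 2 :=
  negEdges_card_le_two_of_tree_general S htree.isAcyclic f hf.1 hf.2.1
end

section
/- A signed graph S whose underlying graph is a star K_{1,k} (a central vertex joined to k ≥ 1 pendant vertices), with m positive and n negative edges, is additively graceful if and only if n = 0, or n = 1, or S is the star K_{1,2} (the path P₃) both of whose edges are negative. -/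
/-- Vertex type of a signed star: the center, `a` positive pendants, `b` negative pendants. -/
abbrev StarV (a b : ℕ) : Type := Unit ⊕ (Fin a ⊕ Fin b)

/-- the central vertex -/
def ctr {a b : ℕ} : StarV a b := Sum.inl ()
/-- the end of the `i`-th positive pendant edge -/
def pp {a b : ℕ} (i : Fin a) : StarV a b := Sum.inr (Sum.inl i)
/-- the end of the `i`-th negative pendant edge -/
def np {a b : ℕ} (i : Fin b) : StarV a b := Sum.inr (Sum.inr i)

/-- The signed star `K_{1,a+b}` with `a` positive and `b` negative pendant edges. -/
def starS (a b : ℕ) : SignedGraph (StarV a b) where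
  posEdges := Finset.univ.image (fun i : Fin a => s(ctr, pp i))
  negEdges := Finset.univ.image (fun i : Fin b => s(ctr, np i))
  disjoint := by
    rw [Finset.disjoint_left]
    intro e he1 he2
    simp only [Finset.mem_image, Finset.mem_univ, true_and] at he1 he2
    obtain ⟨i, rfl⟩ := he1
    obtain ⟨j, h⟩ := he2
    simp [ctr, pp, np, Sym2.eq_iff] at h
  pos_not_diag := by
    intro e he
    simp only [Finset.mem_image, Finset.mem_univ, true_and] at he
    obtain ⟨i, rfl⟩ := he
    simp [ctr, pp, Sym2.mk_isDiag_iff]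
  neg_not_diag := by
    intro e he
    simp only [Finset.mem_image, Finset.mem_univ, true_and] at he
    obtain ⟨i, rfl⟩ := he
    simp [ctr, np, Sym2.mk_isDiag_iff]

/-!
If `n ≥ 2`, the negative edges labelled `1` and `2` force the center to have label `0`, since
`2 = 1 + 1` would repeat a vertex label. The negative edge labelled `1` then uses up the vertex
label `1`, which a positive edge labelled `1` would need as well; so `m = 0`. Finally, the negative
edge labelled `n` has an endpoint labelled `n`, and `n ≤ ⌈(n + 1) / 2⌉` leaves only `n = 2`.
-/

namespace SignedGraph

/-- A vertex incident to every edge, as the central vertex of a star is. Isolated vertices are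
allowed, so a signed graph with a center is a signed star up to isolated vertices. -/
def IsCenter {V : Type} [DecidableEq V] (S : SignedGraph V) (c : V) : Prop :=
  ∀ e ∈ S.posEdges ∪ S.negEdges, c ∈ e

end SignedGraph

namespace IsAddGraceful

variable {V : Type} [DecidableEq V] {S : SignedGraph V} {f : V → ℕ} {c : V} {k : ℕ}

theorem exists_posEdge_dist_eq (hf : IsAddGraceful S f) (hc : S.IsCenter c)
    (hk : k ∈ Finset.Icc 1 S.posEdges.card) :
    ∃ v, s(c, v) ∈ S.posEdges ∧ Nat.dist (f c) (f v) = k := by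
  obtain ⟨-, -, hpos, -⟩ := hf
  rw [← hpos] at hk
  obtain ⟨e, he, hlabel⟩ := Finset.mem_image.mp hk
  obtain ⟨v, rfl⟩ := Sym2.mem_iff_exists.mp (hc e (Finset.mem_union_left _ he))
  exact ⟨v, he, hlabel⟩

theorem exists_negEdge_add_eq (hf : IsAddGraceful S f) (hc : S.IsCenter c)
    (hk : k ∈ Finset.Icc 1 S.negEdges.card) :
    ∃ v, s(c, v) ∈ S.negEdges ∧ f c + f v = k := by
  obtain ⟨-, -, -, hneg⟩ := hf
  rw [← hneg] at hk
  obtain ⟨e, he, hlabel⟩ := Finset.mem_image.mp hk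
  obtain ⟨v, rfl⟩ := Sym2.mem_iff_exists.mp (hc e (Finset.mem_union_right _ he))
  exact ⟨v, he, hlabel⟩

theorem center_eq_zero (hf : IsAddGraceful S f) (hc : S.IsCenter c)
    (hn : 2 ≤ S.negEdges.card) : f c = 0 := by
  obtain ⟨u, -, hu⟩ := hf.exists_negEdge_add_eq hc (Finset.mem_Icc.mpr ⟨le_rfl, by lia⟩)
  obtain ⟨v, hcv, hv⟩ := hf.exists_negEdge_add_eq hc (Finset.mem_Icc.mpr ⟨one_le_two, hn⟩)
  have hne : f c ≠ f v := hf.1.ne fun h ↦ S.neg_not_diag _ hcv (Sym2.mk_isDiag_iff.mpr h)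
  lia

theorem posEdges_eq_empty (hf : IsAddGraceful S f) (hc : S.IsCenter c)
    (hn : 2 ≤ S.negEdges.card) : S.posEdges = ∅ := by
  have hc0 : f c = 0 := hf.center_eq_zero hc hn
  by_contra hne
  have hm : 1 ≤ S.posEdges.card := Finset.one_le_card.mpr (Finset.nonempty_iff_ne_empty.mpr hne)
  obtain ⟨u, hcu, hu⟩ := hf.exists_posEdge_dist_eq hc (Finset.mem_Icc.mpr ⟨le_rfl, hm⟩)
  obtain ⟨v, hcv, hv⟩ := hf.exists_negEdge_add_eq hc (Finset.mem_Icc.mpr ⟨le_rfl, by lia⟩)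
  have huv : u = v := hf.1 <| by
    rw [hc0, Nat.dist_eq_sub_of_le (Nat.zero_le _)] at hu
    lia
  exact Finset.disjoint_left.mp S.disjoint hcu (huv ▸ hcv)

theorem card_negEdges_le_two (hf : IsAddGraceful S f) (hc : S.IsCenter c) :
    S.negEdges.card ≤ 2 := by
  by_contra! hn
  have hc0 : f c = 0 := hf.center_eq_zero hc hn.le
  have hm : S.posEdges.card = 0 := Finset.card_eq_zero.mpr (hf.posEdges_eq_empty hc hn.le)
  obtain ⟨v, -, hv⟩ := hf.exists_negEdge_add_eq hc (Finset.mem_Icc.mpr ⟨by lia, le_rfl⟩)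
  have hle : f v ≤ S.posEdges.card + (S.negEdges.card + 2) / 2 := hf.2.1 v
  lia

end IsAddGraceful

section Star

variable {m n : ℕ}

theorem card_posEdges_starS (m n : ℕ) : (starS m n).posEdges.card = m := by
  refine (Finset.card_image_of_injective _ fun i j h ↦ ?_).trans (Finset.card_fin m)
  simpa [ctr, pp] using h

theorem card_negEdges_starS (m n : ℕ) : (starS m n).negEdges.card = n := by
  refine (Finset.card_image_of_injective _ fun i j h ↦ ?_).trans (Finset.card_fin n)
  simpa [ctr, np] using h

theorem isCenter_ctr (m n : ℕ) : (starS m n).IsCenter ctr := by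
  intro e he
  simp only [starS, Finset.mem_union, Finset.mem_image, Finset.mem_univ, true_and] at he
  obtain ⟨i, rfl⟩ | ⟨i, rfl⟩ := he <;> exact Sym2.mem_mk_left _ _

theorem image_fin_val_add_one (k : ℕ) :
    Finset.univ.image (fun i : Fin k ↦ (i : ℕ) + 1) = Finset.Icc 1 k := by
  ext l
  simp only [Finset.mem_image, Finset.mem_univ, true_and, Finset.mem_Icc]
  exact ⟨by rintro ⟨i, rfl⟩; lia, fun h ↦ ⟨⟨l - 1, by lia⟩, Nat.sub_add_cancel h.1⟩⟩

theorem isAddGraceful_starS {f : StarV m n → ℕ} (hinj : Function.Injective f)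
    (hle : ∀ v, f v ≤ m + (n + 2) / 2)
    (hpos : ∀ i : Fin m, Nat.dist (f ctr) (f (pp i)) = i + 1)
    (hneg : ∀ j : Fin n, f ctr + f (np j) = j + 1) : IsAddGraceful (starS m n) f := by
  rw [IsAddGraceful, card_posEdges_starS, card_negEdges_starS]
  refine ⟨hinj, hle, ?_, ?_⟩
  · rw [← image_fin_val_add_one, starS, Finset.image_image]
    exact Finset.image_congr fun i _ ↦ hpos i
  · rw [← image_fin_val_add_one, starS, Finset.image_image]
    exact Finset.image_congr fun j _ ↦ hneg j

theorem exists_isAddGraceful_starS_of_le_one (m : ℕ) (hn : n ≤ 1) :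
    ∃ f, IsAddGraceful (starS m n) f := by
  have : Subsingleton (Fin n) := Fin.subsingleton_iff_le_one.mpr hn
  refine ⟨Sum.elim (fun _ ↦ 1) (Sum.elim (fun i ↦ i + 2) (fun _ ↦ 0)),
    isAddGraceful_starS ?_ ?_ (fun i ↦ ?_) (fun j ↦ ?_)⟩
  · exact (Function.injective_of_subsingleton _).sumElim
      (((add_left_injective 2).comp Fin.val_injective).sumElim
        (Function.injective_of_subsingleton _) (by simp)) (by simp)
  · simp only [Sum.forall, Sum.elim_inl, Sum.elim_inr]
    lia
  · simp [ctr, pp, Nat.dist]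
  · simp only [ctr, np, Sum.elim_inl, Sum.elim_inr]
    lia

theorem exists_isAddGraceful_starS_zero_two : ∃ f, IsAddGraceful (starS 0 2) f := by
  refine ⟨Sum.elim (fun _ ↦ 0) (Sum.elim Fin.elim0 (fun j ↦ j + 1)),
    isAddGraceful_starS ?_ ?_ (fun i ↦ i.elim0) (fun _ ↦ Nat.zero_add _)⟩ <;> decide

end Star

/-- A signed star `K_{1,k}` (`k = m + n ≥ 1`) with `m` positive
and `n` negative edges is additively graceful if and only if `n = 0`, or
`n = 1`, or it is the all-negative star `K_{1,2}` (i.e. `m = 0` and `n = 2`). -/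
theorem star_addGraceful_iff (m n : ℕ) (hk : 1 ≤ m + n) :
    (∃ f : StarV m n → ℕ, IsAddGraceful (starS m n) f) ↔
      n = 0 ∨ n = 1 ∨ (m = 0 ∧ n = 2) := by
  constructor
  · rintro ⟨f, hf⟩
    have hn_le : n ≤ 2 := card_negEdges_starS m n ▸ hf.card_negEdges_le_two (isCenter_ctr m n)
    have hm_of_two_le : 2 ≤ n → m = 0 := fun hn ↦ by
      rw [← card_posEdges_starS m n, Finset.card_eq_zero]
      exact hf.posEdges_eq_empty (isCenter_ctr m n) ((card_negEdges_starS m n).symm ▸ hn)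
    lia
  · rintro (rfl | rfl | ⟨rfl, rfl⟩)
    · exact exists_isAddGraceful_starS_of_le_one m zero_le_one
    · exact exists_isAddGraceful_starS_of_le_one m le_rfl
    · exact exists_isAddGraceful_starS_zero_two
end

section
/- Let S be the signed star with central vertex z, one negative pendant edge zu₁, and m ≥ 1 positive pendant edges zv₁,…,zv_m. Then every additively graceful labeling f of S satisfies f(z)=1, f(u₁)=0, and {f(v₁),…,f(v_m)} = {2,3,…,m+1}; that is, the additively graceful labeling of S is unique up to permutation of the labels among the positive pendant vertices v₁,…,v_m. -/
/-!
Suppose the star has `a > 0` positive and `b > 0` negative edges, and let `c` be the label of its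
center. A negative edge labelled `1` forces `c ≤ 1`, and if `c = 0`, then the pendant ends of the
positive and of the negative edge labelled `1` would share the label `1`. So `c = 1`, and the
negative pendants carry exactly `0, …, b - 1`; since `c` is not among these, `b = 1`. Now `0` is
taken, so every positive pendant lies above the center, and the edge labels `1, …, a` translate
into the vertex labels `2, …, a + 1`.
-/

open Finset

section PendantLabels

variable {a b c : ℕ} {P Q : Finset ℕ}

theorem center_eq_one (hPQ : Disjoint P Q) (hP : 1 ∈ P.image (Nat.dist c))
    (hQ : 1 ∈ Q.image (c + ·)) : c = 1 := by
  obtain ⟨x, hx, hcx⟩ := mem_image.mp hP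
  obtain ⟨y, hy, hcy⟩ := mem_image.mp hQ
  have hxy : x ≠ y := disjoint_iff_ne.mp hPQ x hx y hy
  simp only [Nat.dist] at hcx
  lia

theorem eq_range_of_image_one_add_eq_Icc (hQ : Q.image (1 + ·) = Icc 1 b) : Q = range b := by
  apply image_injective (add_right_injective 1)
  rw [hQ, range_eq_Ico, image_add_left_Ico, add_zero, add_comm 1 b, Ico_add_one_right_eq_Icc]

theorem eq_Icc_of_image_dist_one_eq_Icc (h0 : 0 ∉ P) (hP : P.image (Nat.dist 1) = Icc 1 a) :
    P = Icc 2 (a + 1) := by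
  have dist_add_one : ∀ x ∈ P, Nat.dist 1 x + 1 = x := fun x hx => by
    have : x ≠ 0 := ne_of_mem_of_not_mem hx h0
    simp only [Nat.dist]
    lia
  calc
    P = P.image (fun x => Nat.dist 1 x + 1) := by rw [image_congr dist_add_one, image_id']
    _ = (P.image (Nat.dist 1)).image (· + 1) := by rw [image_image]; rfl
    _ = Icc 2 (a + 1) := by rw [hP, image_add_right_Icc]

theorem pendant_labels_unique (ha : 0 < a) (hb : 0 < b) (hPQ : Disjoint P Q) (hc : c ∉ Q)
    (hP : P.image (Nat.dist c) = Icc 1 a) (hQ : Q.image (c + ·) = Icc 1 b) :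
    b = 1 ∧ c = 1 ∧ Q = {0} ∧ P = Icc 2 (a + 1) := by
  obtain rfl : c = 1 := center_eq_one hPQ (hP ▸ left_mem_Icc.mpr ha) (hQ ▸ left_mem_Icc.mpr hb)
  obtain rfl : Q = range b := eq_range_of_image_one_add_eq_Icc hQ
  obtain rfl : b = 1 := le_antisymm (not_lt.mp (mt mem_range.mpr hc)) hb
  have h0 : 0 ∉ P := disjoint_right.mp hPQ (mem_range.mpr one_pos)
  exact ⟨rfl, rfl, range_one, eq_Icc_of_image_dist_one_eq_Icc h0 hP⟩

end PendantLabels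

namespace starS

variable {a b : ℕ}

theorem card_posEdges : (starS a b).posEdges.card = a := by
  have hinj : Function.Injective fun i : Fin a => s((ctr : StarV a b), pp i) := fun i j h => by
    simpa [ctr, pp] using h
  exact (card_image_of_injective _ hinj).trans (card_fin a)

theorem card_negEdges : (starS a b).negEdges.card = b := by
  have hinj : Function.Injective fun j : Fin b => s((ctr : StarV a b), np j) := fun i j h => by
    simpa [ctr, np] using h
  exact (card_image_of_injective _ hinj).trans (card_fin b)

theorem image_posLabel (f : StarV a b → ℕ) :
    (starS a b).posEdges.image (posLabel f) =
      (univ.image fun i => f (pp i)).image (Nat.dist (f ctr)) := by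
  simp only [starS, image_image]
  rfl

theorem image_negLabel (f : StarV a b → ℕ) :
    (starS a b).negEdges.image (negLabel f) =
      (univ.image fun j => f (np j)).image (f ctr + ·) := by
  simp only [starS, image_image]
  rfl

theorem disjoint_pendant_labels {f : StarV a b → ℕ} (hf : f.Injective) :
    Disjoint (univ.image fun i => f (pp i)) (univ.image fun j => f (np j)) := by
  simp [disjoint_left, hf.eq_iff, pp, np]

theorem ctr_label_notMem {f : StarV a b → ℕ} (hf : f.Injective) :
    f ctr ∉ univ.image fun j => f (np j) := by
  simp [hf.eq_iff, ctr, np]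

end starS

theorem star_one_neg_unique_general {a b : ℕ} (ha : 0 < a) (hb : 0 < b) {f : StarV a b → ℕ}
    (hf : f.Injective)
    (hpos : (starS a b).posEdges.image (posLabel f) = Icc 1 (starS a b).posEdges.card)
    (hneg : (starS a b).negEdges.image (negLabel f) = Icc 1 (starS a b).negEdges.card) :
    b = 1 ∧ f ctr = 1 ∧ (∀ j, f (np j) = 0) ∧
      univ.image (fun i => f (pp i)) = Icc 2 (a + 1) := by
  rw [starS.image_posLabel, starS.card_posEdges] at hpos
  rw [starS.image_negLabel, starS.card_negEdges] at hneg
  obtain ⟨hb1, hctr, hnp, hpp⟩ := pendant_labels_unique ha hb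
    (starS.disjoint_pendant_labels hf) (starS.ctr_label_notMem hf) hpos hneg
  have hnp_zero (j : Fin b) : f (np j) = 0 :=
    mem_singleton.mp (hnp ▸ mem_image_of_mem (fun j => f (np j)) (mem_univ j))
  exact ⟨hb1, hctr, hnp_zero, hpp⟩

/-- For the signed star with center `z`, one negative pendant
edge `z u₁` and `m ≥ 1` positive pendant edges `z vᵢ`, every additively
graceful labeling `f` satisfies `f z = 1`, `f u₁ = 0` and
`{f v₁, …, f v_m} = {2, 3, …, m + 1}`. -/
theorem star_one_neg_unique (m : ℕ) (hm : 1 ≤ m) (f : StarV m 1 → ℕ)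
    (hf : IsAddGraceful (starS m 1) f) :
    f ctr = 1 ∧ f (np 0) = 0 ∧
      Finset.univ.image (fun i : Fin m => f (pp i)) = Finset.Icc 2 (m + 1) := by
  obtain ⟨hinj, -, hpos, hneg⟩ := hf
  obtain ⟨-, hctr, hnp, hpp⟩ := star_one_neg_unique_general hm Nat.one_pos hinj hpos hneg
  exact ⟨hctr, hnp 0, hpp⟩
end

section
/- Let S be the signed double star consisting of a positive edge z₁z₂, together with l ≥ 0 positive pendant edges z₁v₁,…,z₁v_l and one negative pendant edge z₁u attached at z₁, and r ≥ 0 positive pendant edges z₂w₁,…,z₂w_r attached at z₂ (so S is a (l+r+3, l+r+1, 1) signed graph). Then S is additively graceful. -/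
/-- Vertex type of a double star: the two centers `z₁, z₂`, the `a` positive
pendant neighbours and `b` negative pendant neighbours of `z₁`, and the `c`
positive pendant neighbours of `z₂`. -/
abbrev DSV (a b c : ℕ) : Type := (Unit ⊕ Unit) ⊕ (Fin a ⊕ Fin b ⊕ Fin c)

/-- the first central vertex `z₁` -/
def z1 {a b c : ℕ} : DSV a b c := Sum.inl (Sum.inl ())
/-- the second central vertex `z₂` -/
def z2 {a b c : ℕ} : DSV a b c := Sum.inl (Sum.inr ())
/-- the end `vᵢ` of the `i`-th positive pendant edge at `z₁` -/
def vv {a b c : ℕ} (i : Fin a) : DSV a b c := Sum.inr (Sum.inl i)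
/-- the end `uᵢ` of the `i`-th negative pendant edge at `z₁` -/
def uu {a b c : ℕ} (i : Fin b) : DSV a b c := Sum.inr (Sum.inr (Sum.inl i))
/-- the end `wᵢ` of the `i`-th positive pendant edge at `z₂` -/
def ww {a b c : ℕ} (i : Fin c) : DSV a b c := Sum.inr (Sum.inr (Sum.inr i))

/-- The signed double star with a *positive* central edge `z₁z₂`,
`a` positive and `b` negative pendant edges at `z₁`, and `c` positive pendant
edges at `z₂`. -/
def doubleStarPos (a b c : ℕ) : SignedGraph (DSV a b c) where
  posEdges :=
    {s(z1, z2)} ∪ Finset.univ.image (fun i : Fin a => s(z1, vv i)) ∪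
      Finset.univ.image (fun i : Fin c => s(z2, ww i))
  negEdges := Finset.univ.image (fun i : Fin b => s(z1, uu i))
  disjoint := by
    rw [Finset.disjoint_left]
    intro e he1 he2
    simp only [Finset.mem_union, Finset.mem_singleton, Finset.mem_image,
      Finset.mem_univ, true_and] at he1 he2
    obtain ⟨j, rfl⟩ := he2
    rcases he1 with (h | ⟨i, h⟩) | ⟨i, h⟩ <;>
      simp [z1, z2, vv, uu, ww, Sym2.eq_iff] at h
  pos_not_diag := by
    intro e he
    simp only [Finset.mem_union, Finset.mem_singleton, Finset.mem_image,
      Finset.mem_univ, true_and] at he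
    rcases he with (rfl | ⟨i, rfl⟩) | ⟨i, rfl⟩ <;>
      simp [z1, z2, vv, ww, Sym2.mk_isDiag_iff]
  neg_not_diag := by
    intro e he
    simp only [Finset.mem_image, Finset.mem_univ, true_and] at he
    obtain ⟨i, rfl⟩ := he
    simp [z1, uu, Sym2.mk_isDiag_iff]

/-!
Spread the vertices bijectively over `{0, …, l + r + 2}` in the order `u`, `z₁`, the `wᵢ`, `z₂`,
the `vᵢ`. The negative edge gets `0 + 1`. At `z₁` the positive labels are the distances from `1`
to `z₂ ↦ r + 2` and to the consecutive values after it, which are `r + 1, …, r + l + 1`; at `z₂`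
they are the distances to the `r` consecutive values just below it, which are `1, …, r`.
-/

open Finset

@[simp]
theorem posLabel_mk {V : Type} (f : V → ℕ) (u v : V) :
    posLabel f s(u, v) = Nat.dist (f u) (f v) := rfl

@[simp]
theorem negLabel_mk {V : Type} (f : V → ℕ) (u v : V) : negLabel f s(u, v) = f u + f v := rfl

theorem image_univ_fin_val_add (n k : ℕ) :
    univ.image (fun i : Fin n ↦ (i : ℕ) + k) = Ico k (n + k) := by
  ext x
  simp only [mem_image, mem_univ, true_and, mem_Ico]
  exact ⟨by rintro ⟨i, rfl⟩; omega, fun hx ↦ ⟨⟨x - k, by omega⟩, Nat.sub_add_cancel hx.1⟩⟩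

theorem image_univ_fin_sub_val (n : ℕ) :
    univ.image (fun i : Fin n ↦ n - (i : ℕ)) = Icc 1 n := by
  ext x
  simp only [mem_image, mem_univ, true_and, mem_Icc]
  exact ⟨by rintro ⟨i, rfl⟩; omega, fun hx ↦ ⟨⟨n - x, by omega⟩, Nat.sub_sub_self hx.2⟩⟩

section DoubleStar

variable {a b c : ℕ}

theorem vv_injective : Function.Injective (vv : Fin a → DSV a b c) :=
  Sum.inr_injective.comp Sum.inl_injective

theorem uu_injective : Function.Injective (uu : Fin b → DSV a b c) :=
  Sum.inr_injective.comp (Sum.inr_injective.comp Sum.inl_injective)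

theorem ww_injective : Function.Injective (ww : Fin c → DSV a b c) :=
  Sum.inr_injective.comp (Sum.inr_injective.comp Sum.inr_injective)

theorem card_negEdges_doubleStarPos (a b c : ℕ) : #(doubleStarPos a b c).negEdges = b := by
  have edge_injective : Function.Injective fun i : Fin b ↦ s((z1 : DSV a b c), uu i) :=
    fun _ _ h ↦ uu_injective (Sym2.congr_right.mp h)
  simp [doubleStarPos, card_image_of_injective _ edge_injective]

theorem card_posEdges_doubleStarPos (a b c : ℕ) :
    #(doubleStarPos a b c).posEdges = a + c + 1 := by
  have edge_vv_injective : Function.Injective fun i : Fin a ↦ s((z1 : DSV a b c), vv i) :=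
    fun _ _ h ↦ vv_injective (Sym2.congr_right.mp h)
  have edge_ww_injective : Function.Injective fun i : Fin c ↦ s((z2 : DSV a b c), ww i) :=
    fun _ _ h ↦ ww_injective (Sym2.congr_right.mp h)
  have center_disjoint_vv :
      Disjoint {s(z1, z2)} (univ.image fun i : Fin a ↦ s((z1 : DSV a b c), vv i)) := by
    simp [z1, z2, vv]
  have disjoint_ww :
      Disjoint ({s(z1, z2)} ∪ univ.image fun i : Fin a ↦ s(z1, vv i))
        (univ.image fun i : Fin c ↦ s((z2 : DSV a b c), ww i)) := by
    simp [disjoint_left, z1, z2, vv, ww]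
  rw [doubleStarPos, card_union_of_disjoint disjoint_ww, card_union_of_disjoint center_disjoint_vv,
    card_image_of_injective _ edge_vv_injective, card_image_of_injective _ edge_ww_injective,
    card_singleton, card_fin, card_fin]
  omega

theorem isAddGraceful_doubleStarPos_iff {f : DSV a b c → ℕ} :
    IsAddGraceful (doubleStarPos a b c) f ↔
      Function.Injective f ∧
      (∀ x, f x ≤ a + c + 1 + (b + 2) / 2) ∧
      {Nat.dist (f z1) (f z2)} ∪ univ.image (fun i ↦ Nat.dist (f z1) (f (vv i))) ∪
        univ.image (fun i ↦ Nat.dist (f z2) (f (ww i))) = Icc 1 (a + c + 1) ∧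
      univ.image (fun i ↦ f z1 + f (uu i)) = Icc 1 b := by
  rw [IsAddGraceful, card_posEdges_doubleStarPos, card_negEdges_doubleStarPos]
  simp only [doubleStarPos, image_union, image_singleton, image_image, Function.comp_def,
    posLabel_mk, negLabel_mk]

end DoubleStar

section Labeling

variable {l r : ℕ}

/-- The labeling of the double star with one negative pendant edge by consecutive integers from
`0` on, in the order `u`, `z₁`, the `wᵢ`, `z₂`, the `vᵢ`. -/
def consecutiveLabeling : DSV l 1 r → ℕ :=
  Sum.elim (Sum.elim (fun _ ↦ 1) fun _ ↦ r + 2)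
    (Sum.elim (fun i ↦ i + (r + 3)) (Sum.elim (fun _ ↦ 0) fun i ↦ i + 2))

@[simp]
theorem consecutiveLabeling_z1 : consecutiveLabeling (z1 : DSV l 1 r) = 1 := rfl

@[simp]
theorem consecutiveLabeling_z2 : consecutiveLabeling (z2 : DSV l 1 r) = r + 2 := rfl

@[simp]
theorem consecutiveLabeling_vv (i : Fin l) :
    consecutiveLabeling (vv i : DSV l 1 r) = i + (r + 3) := rfl

@[simp]
theorem consecutiveLabeling_uu (i : Fin 1) : consecutiveLabeling (uu i : DSV l 1 r) = 0 := rfl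

@[simp]
theorem consecutiveLabeling_ww (i : Fin r) :
    consecutiveLabeling (ww i : DSV l 1 r) = i + 2 := rfl

theorem consecutiveLabeling_injective :
    Function.Injective (consecutiveLabeling : DSV l 1 r → ℕ) := by
  have vv_label_injective : Function.Injective fun i : Fin l ↦ (i : ℕ) + (r + 3) :=
    (add_left_injective _).comp Fin.val_injective
  have ww_label_injective : Function.Injective fun i : Fin r ↦ (i : ℕ) + 2 :=
    (add_left_injective _).comp Fin.val_injective
  refine .sumElim
    (.sumElim (Function.injective_of_subsingleton _) (Function.injective_of_subsingleton _) ?_)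
    (.sumElim vv_label_injective
      (.sumElim (Function.injective_of_subsingleton _) ww_label_injective ?_) ?_) ?_
  all_goals grind

theorem consecutiveLabeling_le (x : DSV l 1 r) : consecutiveLabeling x ≤ l + r + 2 := by
  rcases x with (_ | _) | i | _ | i <;>
    simp only [consecutiveLabeling, Sum.elim_inl, Sum.elim_inr] <;> omega

theorem dist_consecutiveLabeling_z1_z2 :
    Nat.dist (consecutiveLabeling (z1 : DSV l 1 r)) (consecutiveLabeling (z2 : DSV l 1 r)) =
      r + 1 := by
  simp [Nat.dist]

theorem image_dist_consecutiveLabeling_z1_vv :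
    univ.image (fun i : Fin l ↦
      Nat.dist (consecutiveLabeling (z1 : DSV l 1 r)) (consecutiveLabeling (vv i : DSV l 1 r))) =
      Ico (r + 2) (l + (r + 2)) := by
  rw [← image_univ_fin_val_add]
  congr! 2 with i
  simp only [consecutiveLabeling_z1, consecutiveLabeling_vv, Nat.dist]
  omega

theorem image_dist_consecutiveLabeling_z2_ww :
    univ.image (fun i : Fin r ↦
      Nat.dist (consecutiveLabeling (z2 : DSV l 1 r)) (consecutiveLabeling (ww i : DSV l 1 r))) =
      Icc 1 r := by
  rw [← image_univ_fin_sub_val]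
  congr! 2 with i
  simp only [consecutiveLabeling_z2, consecutiveLabeling_ww, Nat.dist]
  omega

end Labeling

/-- The signed double star with positive central edge `z₁z₂`,
`l ≥ 0` positive pendant edges and one negative pendant edge at `z₁`, and
`r ≥ 0` positive pendant edges at `z₂`, is additively graceful. -/
theorem doubleStar_onePendantNeg_addGraceful (l r : ℕ) :
    ∃ f : DSV l 1 r → ℕ, IsAddGraceful (doubleStarPos l 1 r) f := by
  refine ⟨consecutiveLabeling, isAddGraceful_doubleStarPos_iff.mpr
    ⟨consecutiveLabeling_injective, consecutiveLabeling_le, ?_, ?_⟩⟩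
  · rw [dist_consecutiveLabeling_z1_z2, image_dist_consecutiveLabeling_z1_vv,
      image_dist_consecutiveLabeling_z2_ww]
    ext k
    simp only [mem_union, mem_singleton, mem_Ico, mem_Icc]
    omega
  · simp
end

section
/- Let S(l,3) be the signed double star consisting of a positive central edge z₁z₂, together with l positive pendant edges z₁v₁,…,z₁v_l and two negative pendant edges z₁u₁, z₁u₂ attached at z₁, and 3 positive pendant edges z₂w₁, z₂w₂, z₂w₃ attached at z₂ (so S(l,3) is a (l+7, l+4, 2) signed graph). If l is odd and l ≥ 3, then S(l,3) is not additively graceful. -/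
/-!
The negative labels `1` and `2` force `f z₁ = 0` and give `u₁`, `u₂` the values `1`, `2`, and
counting shows that `f` takes every value in `{0, …, m + 2}`. Let `P` be the set of values on the
positive neighbours of `z₁`; as `f z₁ = 0`, it is also the set of labels of the positive edges at
`z₁`. Hence both `W ∪ {1, 2}` and `D ∪ {m + 1, m + 2}` are the complement of `P` in
`{1, …, m + 2}`, where `W` is the set of values on the `wᵢ` and `D = {|f z₂ - w| : w ∈ W}`.

If there are three `wᵢ`, then `W = {x, m + 1, m + 2}` and, with `c = f z₂`,
`{|c - x|, m + 1 - c, m + 2 - c} = {x, 1, 2}`. Two of these distances are consecutive, so they are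
`1, 2`, which gives `m = 2x`, or `2, 3`, which gives `m = 5`. Since `m = l + 4`, the number `l` is
even or equal to `1`.
-/

open Finset

namespace IsAddGraceful

variable {V : Type} [DecidableEq V] {S : SignedGraph V} {f : V → ℕ}

lemma injective (hf : IsAddGraceful S f) : Function.Injective f := hf.1

lemma exists_eq_of_le [Fintype V] (hf : IsAddGraceful S f)
    (hV : S.posEdges.card + (S.negEdges.card + 2) / 2 < Fintype.card V) {k : ℕ}
    (hk : k ≤ S.posEdges.card + (S.negEdges.card + 2) / 2) : ∃ v, f v = k := by
  have himage : univ.image f = range (S.posEdges.card + (S.negEdges.card + 2) / 2 + 1) := by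
    refine eq_of_subset_of_card_le (fun k hk ↦ ?_) ?_
    · obtain ⟨v, -, rfl⟩ := mem_image.1 hk
      exact mem_range_succ_iff.2 (hf.2.1 v)
    · rwa [card_range, card_image_of_injective _ hf.injective, card_univ]
  simpa using himage.ge (mem_range_succ_iff.2 hk)

end IsAddGraceful

lemma eq_zero_of_add_eq_one_of_add_eq_two {V : Type*} {f : V → ℕ} (hf : Function.Injective f)
    {z u u' : V} (hu' : u' ≠ z) (h₁ : f z + f u = 1) (h₂ : f z + f u' = 2) : f z = 0 := by
  have := hf.ne hu'
  omega

lemma even_or_eq_five_of_union_eq {m c : ℕ} {W : Finset ℕ} (hcard : #W = 3)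
    (hW : ∀ w ∈ W, 3 ≤ w) (hc : c ∈ Icc 3 m)
    (h : W ∪ Icc 1 2 = W.image (Nat.dist c) ∪ Icc (m + 1) (m + 2)) : Even m ∨ m = 5 := by
  rw [mem_Icc] at hc
  have mem_of_large (k : ℕ) (hk : k ∈ Icc (m + 1) (m + 2)) : k ∈ W := by
    have := h.ge (mem_union_right _ hk)
    simp only [mem_union, mem_Icc] at this hk
    exact this.resolve_right (by omega)
  have hpair : {m + 1, m + 2} ⊆ W := by
    simp [insert_subset_iff, mem_of_large]
  obtain ⟨x, hx⟩ : ∃ x, W \ {m + 1, m + 2} = {x} := by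
    rw [← card_eq_one, card_sdiff_of_subset hpair, hcard, card_pair (by omega)]
  have hW_eq : W = {x, m + 1, m + 2} := by
    rw [← sdiff_union_of_subset hpair, hx, singleton_union]
  have hxW : x ∈ W ∧ x ∉ ({m + 1, m + 2} : Finset ℕ) :=
    mem_sdiff.1 (hx.ge (mem_singleton_self x))
  have hx_ge := hW x hxW.1
  simp only [mem_insert, mem_singleton, not_or] at hxW
  have mem_distances (k : ℕ) (hk : k ∈ W ∪ Icc 1 2) (hkm : k ∉ Icc (m + 1) (m + 2)) :
      k = Nat.dist c x ∨ k = m + 1 - c ∨ k = m + 2 - c := by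
    have := (mem_union.1 (h.le hk)).resolve_right hkm
    simp only [hW_eq, mem_image, mem_insert, mem_singleton, exists_eq_or_imp, exists_eq_left,
      Nat.dist] at this ⊢
    omega
  have h₁ := mem_distances 1 (by simp) (by simp; omega)
  have h₂ := mem_distances 2 (by simp) (by simp; omega)
  have h₃ := mem_distances x (mem_union_left _ hxW.1) (by simp; omega)
  rw [Nat.dist] at h₁ h₂ h₃
  rw [Nat.even_iff]
  omega

namespace doubleStarPos

variable {a b c : ℕ} {f : DSV a b c → ℕ}

lemma card_negEdges (a b c : ℕ) : #(doubleStarPos a b c).negEdges = b := by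
  rw [doubleStarPos, card_image_of_injective, card_univ, Fintype.card_fin]
  exact fun i j h ↦ by simpa [z1, uu] using h

lemma card_posEdges (a b c : ℕ) : #(doubleStarPos a b c).posEdges = a + c + 1 := by
  rw [doubleStarPos, card_union_of_disjoint, card_union_of_disjoint, card_image_of_injective,
    card_image_of_injective, card_singleton, card_univ, card_univ, Fintype.card_fin,
    Fintype.card_fin]
  · omega
  · exact fun i j h ↦ by simpa [z2, ww] using h
  · exact fun i j h ↦ by simpa [z1, vv] using h
  · simp [z1, z2, vv]
  · simp [disjoint_left, z1, z2, vv, ww]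

/-- The values of `f` on the positive neighbours `z₂, v₁, …, vₐ` of `z₁`. -/
def posNbrLabels (f : DSV a b c → ℕ) : Finset ℕ :=
  insert (f z2) (univ.image fun i ↦ f (vv i))

/-- The values of `f` on the leaves `w₁, …, w_c` at `z₂`. -/
def leafLabels (f : DSV a b c → ℕ) : Finset ℕ :=
  univ.image fun i ↦ f (ww i)

lemma card_posNbrLabels_le (f : DSV a b c → ℕ) : #(posNbrLabels f) ≤ a + 1 :=
  (card_insert_le _ _).trans (Nat.succ_le_succ (card_image_le.trans (card_fin a).le))

lemma card_leafLabels (hf : Function.Injective f) : #(leafLabels f) = c := by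
  rw [leafLabels, card_image_of_injective, card_univ, Fintype.card_fin]
  exact fun i j h ↦ by simpa [ww] using hf h

lemma image_posLabel_posEdges (hz : f z1 = 0) :
    (doubleStarPos a b c).posEdges.image (posLabel f) =
      posNbrLabels f ∪ (leafLabels f).image (Nat.dist (f z2)) := by
  simp [doubleStarPos, image_union, image_image, posNbrLabels, leafLabels, posLabel,
    Function.comp_def, hz, Nat.dist]

lemma image_negLabel_negEdges (f : DSV a b c → ℕ) :
    (doubleStarPos a b c).negEdges.image (negLabel f) = univ.image fun i ↦ f z1 + f (uu i) := by
  simp [doubleStarPos, image_image, negLabel, Function.comp_def]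

end doubleStarPos

namespace IsAddGraceful

open doubleStarPos

section

variable {a b c : ℕ} {f : DSV a b c → ℕ}

lemma image_z1_add_uu (hf : IsAddGraceful (doubleStarPos a b c) f) :
    (univ.image fun i ↦ f z1 + f (uu i)) = Icc 1 b := by
  rw [← image_negLabel_negEdges, hf.2.2.2, card_negEdges]

lemma posNbrLabels_union_image_dist (hf : IsAddGraceful (doubleStarPos a b c) f)
    (hz : f z1 = 0) :
    posNbrLabels f ∪ (leafLabels f).image (Nat.dist (f z2)) = Icc 1 (a + c + 1) := by
  rw [← image_posLabel_posEdges hz, hf.2.2.1, card_posEdges]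

lemma disjoint_posNbrLabels_image_dist (hf : IsAddGraceful (doubleStarPos a b c) f)
    (hz : f z1 = 0) :
    Disjoint (posNbrLabels f) ((leafLabels f).image (Nat.dist (f z2))) := by
  rw [← card_union_eq_card_add_card]
  refine (card_union_le _ _).antisymm ?_
  rw [hf.posNbrLabels_union_image_dist hz, Nat.card_Icc]
  have := card_posNbrLabels_le f
  have := (card_image_le (f := Nat.dist (f z2))).trans (card_leafLabels hf.injective).le
  omega

end

section

variable {a c : ℕ} {f : DSV a 2 c → ℕ}

lemma apply_z1_eq_zero (hf : IsAddGraceful (doubleStarPos a 2 c) f) : f z1 = 0 := by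
  have exists_uu (k : ℕ) (hk : k ∈ Icc 1 2) : ∃ i, f z1 + f (uu i) = k := by
    simpa using hf.image_z1_add_uu.ge hk
  obtain ⟨i, hi⟩ := exists_uu 1 (by simp)
  obtain ⟨j, hj⟩ := exists_uu 2 (by simp)
  exact eq_zero_of_add_eq_one_of_add_eq_two hf.injective (by simp [z1, uu]) hi hj

lemma image_uu (hf : IsAddGraceful (doubleStarPos a 2 c) f) :
    (univ.image fun i ↦ f (uu i)) = Icc 1 2 := by
  simpa [hf.apply_z1_eq_zero] using hf.image_z1_add_uu

lemma apply_le (hf : IsAddGraceful (doubleStarPos a 2 c) f) (v : DSV a 2 c) :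
    f v ≤ a + c + 3 := by
  simpa [card_posEdges, card_negEdges] using hf.2.1 v

lemma exists_apply_eq (hf : IsAddGraceful (doubleStarPos a 2 c) f) {k : ℕ}
    (hk : k ≤ a + c + 3) : ∃ v, f v = k := by
  refine hf.exists_eq_of_le ?_ ?_ <;> simp [card_posEdges, card_negEdges] <;> omega

lemma leafLabels_union_eq_sdiff (hf : IsAddGraceful (doubleStarPos a 2 c) f) :
    leafLabels f ∪ Icc 1 2 = Icc 1 (a + c + 3) \ posNbrLabels f := by
  have mem_Icc_of_ne {v : DSV a 2 c} (hv : v ≠ z1) : f v ∈ Icc 1 (a + c + 3) :=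
    mem_Icc.2 ⟨Nat.pos_of_ne_zero (hf.apply_z1_eq_zero ▸ hf.injective.ne hv), hf.apply_le v⟩
  rw [← hf.image_uu]
  ext k
  constructor
  · rw [leafLabels, mem_union, mem_image, mem_image]
    rintro (⟨i, -, rfl⟩ | ⟨i, -, rfl⟩) <;>
      refine mem_sdiff.2 ⟨mem_Icc_of_ne ?_, ?_⟩ <;>
      simp [posNbrLabels, hf.injective.eq_iff, z1, z2, vv, uu, ww]
  · rw [mem_sdiff, mem_Icc]
    rintro ⟨⟨hk_pos, hk_le⟩, hk⟩
    obtain ⟨v, rfl⟩ := hf.exists_apply_eq hk_le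
    obtain (_ | _) | i | i | i := v
    · exact absurd hf.apply_z1_eq_zero (Nat.ne_of_gt hk_pos)
    · exact absurd (mem_insert_self _ _) hk
    · exact absurd (mem_insert_of_mem (mem_image_of_mem _ (mem_univ i))) hk
    · exact mem_union_right _ (mem_image_of_mem (fun i ↦ f (uu i)) (mem_univ i))
    · exact mem_union_left _ (mem_image_of_mem _ (mem_univ i))

lemma image_dist_union_eq_sdiff (hf : IsAddGraceful (doubleStarPos a 2 c) f) :
    (leafLabels f).image (Nat.dist (f z2)) ∪ Icc (a + c + 2) (a + c + 3) =
      Icc 1 (a + c + 3) \ posNbrLabels f := by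
  have hunion := hf.posNbrLabels_union_image_dist hf.apply_z1_eq_zero
  have hdisj := hf.disjoint_posNbrLabels_image_dist hf.apply_z1_eq_zero
  have hsplit : Icc 1 (a + c + 3) = Icc 1 (a + c + 1) ∪ Icc (a + c + 2) (a + c + 3) := by
    ext k
    simp only [mem_union, mem_Icc]
    omega
  have hlarge : Disjoint (Icc (a + c + 2) (a + c + 3)) (posNbrLabels f) := by
    refine disjoint_right.2 fun k hk ↦ ?_
    have := hunion.le (mem_union_left _ hk)
    rw [mem_Icc] at this ⊢
    omega
  rw [hsplit, union_sdiff_distrib, ← hunion, union_sdiff_cancel_left hdisj,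
    sdiff_eq_self_of_disjoint hlarge]

lemma leafLabels_union_eq (hf : IsAddGraceful (doubleStarPos a 2 c) f) :
    leafLabels f ∪ Icc 1 2 =
      (leafLabels f).image (Nat.dist (f z2)) ∪ Icc (a + c + 2) (a + c + 3) :=
  hf.leafLabels_union_eq_sdiff.trans hf.image_dist_union_eq_sdiff.symm

lemma three_le_apply (hf : IsAddGraceful (doubleStarPos a 2 c) f) {v : DSV a 2 c}
    (hz : v ≠ z1) (hu : ∀ i, v ≠ uu i) : 3 ≤ f v := by
  have h_zero : f v ≠ 0 := hf.apply_z1_eq_zero ▸ hf.injective.ne hz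
  have h_uu : f v ∉ Icc 1 2 := by
    simpa [← hf.image_uu, hf.injective.eq_iff, eq_comm] using hu
  rw [mem_Icc] at h_uu
  omega

lemma three_le_of_mem_leafLabels (hf : IsAddGraceful (doubleStarPos a 2 c) f) {w : ℕ}
    (hw : w ∈ leafLabels f) : 3 ≤ w := by
  obtain ⟨i, -, rfl⟩ := mem_image.1 hw
  exact hf.three_le_apply (by simp [z1, ww]) (by simp [uu, ww])

lemma apply_z2_mem_Icc (hf : IsAddGraceful (doubleStarPos a 2 c) f) :
    f z2 ∈ Icc 3 (a + c + 1) := by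
  have hz2 : f z2 ∈ Icc 1 (a + c + 1) :=
    (hf.posNbrLabels_union_image_dist hf.apply_z1_eq_zero).le
      (mem_union_left _ (mem_insert_self _ _))
  exact mem_Icc.2 ⟨hf.three_le_apply (by simp [z1, z2]) (by simp [z2, uu]), (mem_Icc.1 hz2).2⟩

end

end IsAddGraceful

/-- The signed double star with positive central edge `z₁z₂`,
`l` positive and `2` negative pendant edges at `z₁`, and `3` positive pendant
edges at `z₂`, is not additively graceful when `l` is odd and `l ≥ 3`. -/
theorem doubleStar_twoNeg_r3_not_addGraceful_of_odd (l : ℕ) (hodd : Odd l) (hl : 3 ≤ l) :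
    ¬ ∃ f : DSV l 2 3 → ℕ, IsAddGraceful (doubleStarPos l 2 3) f := by
  rintro ⟨f, hf⟩
  obtain heven | hfive : Even (l + 4) ∨ l + 4 = 5 :=
    even_or_eq_five_of_union_eq (doubleStarPos.card_leafLabels hf.injective)
      (fun _ ↦ hf.three_le_of_mem_leafLabels) hf.apply_z2_mem_Icc hf.leafLabels_union_eq
  · exact Nat.not_even_iff_odd.2 hodd ((Nat.even_add.1 heven).2 (by decide))
  · omega
end
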